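/- Mixed products of vertex operators and dual vertex operators on the vacuum are signed Schur functions of juxtaposed tuples: for partitions μ = (μ₁,…,μ_l) and ν = (ν₁,…,ν_k), S_{−μ₁} ⋯ S_{−μ_l} S*_{ν₁} ⋯ S*_{ν_k}(1) = (−1)^{|ν|} s_{(μ,ν')} and S*_{μ₁} ⋯ S*_{μ_l} S_{−ν₁} ⋯ S_{−ν_k}(1) = (−1)^{|μ|} s_{(μ,ν')'}, where (μ,ν') denotes the juxtaposed integer tuple (μ₁,…,μ_l,ν'₁,…,ν'_{ν₁}) with ν' the conjugate partition of ν. -/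

import Mathlib

/-!
The proof rests on the translation homomorphism `shift c`, which sends `p_n` to `p_n - c_n z ^ n`.
The differential factor of a vertex operator is such a translation (Taylor's formula), so
`S_{-n}` and `(-1) ^ n S*_n` are both of the form `vop c n`: apply `shift c`, then replace `z ^ j`
by `g_{n+j}`, where `g` is the family `h` for `c = 1` and the family `e` for
`c_n = (-1) ^ (n + 1)`.

Since `shift c` is a ring homomorphism acting on the generating functions in a simple way, it can
be applied entrywise to a Jacobi–Trudi determinant. For the family attached to `c` itself, column
operations give Bernstein's formula `vop_jt`: `vop c n` prepends the entry `n` to the tuple. For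
the dual family, `vop_dual_jt` shows that `vop c n` adds one to every entry of a tuple of length
`n`; this uses `∑ (-1) ^ i e_i h_{n-i} = 0`.

Comparing the two formulas, by induction on the rows of `ν`, yields the dual Jacobi–Trudi identity
`jt_eq_jt_conj`. It rewrites the inner product, which Bernstein's formula evaluates as a
determinant in one family, as the determinant of the conjugate tuple in the other family; the
outer operators then prepend the entries of `μ`, again by Bernstein's formula.
-/

open MvPolynomial

noncomputable section

/-- The ring of symmetric functions `Λ = ℚ[p₁,p₂,…]`, with the variable `X n`
(for `n : ℕ+`) playing the role of the power sum `p_n`. -/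
abbrev Lam : Type := MvPolynomial ℕ+ ℚ

/-- The power sum `p_n`. -/
def pp (n : ℕ+) : Lam := X n

/-- The family `g` with generating function `∑_k g_k t^k = exp (∑_{n≥1} c n · p_n tⁿ / n)`,
characterized by `g 0 = 1` together with the recursion obtained by differentiating the
generating function:  `(k+1) · g (k+1) = ∑_{i=0}^{k} c (i+1) · p_{i+1} · g (k-i)`. -/
def genFam (c : ℕ → ℚ) : ℕ → Lam
  | 0 => 1
  | (k+1) => (((k : ℚ) + 1)⁻¹) •
      ∑ i ∈ Finset.range (k+1), c (i+1) • (pp ⟨i+1, Nat.succ_pos i⟩ * genFam c (k - i))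
  decreasing_by exact Nat.lt_succ_of_le (Nat.sub_le k i)

/-- The complete homogeneous symmetric function `h_k`,
with generating function `exp (∑ p_n tⁿ/n)`. -/
def hh : ℕ → Lam := genFam fun _ => 1

/-- The elementary symmetric function `e_k`,
with generating function `exp (∑ (−1)^{n−1} p_n tⁿ/n)`. -/
def ee : ℕ → Lam := genFam fun n => (-1)^(n+1)

/-- `h` indexed by `ℤ` (zero for negative indices). -/
def hZ (n : ℤ) : Lam := if 0 ≤ n then hh n.toNat else 0

/-- `e` indexed by `ℤ` (zero for negative indices). -/
def eZ (n : ℤ) : Lam := if 0 ≤ n then ee n.toNat else 0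

/-- The differential operator `∏_i (i·∂/∂p_i)^(α i)` (the factors commute,
so the sorted product is the canonical one). -/
def monOp (α : ℕ+ →₀ ℕ) : Module.End ℚ Lam :=
  ((α.support.sort (· ≤ ·)).map fun (i : ℕ+) => (((i : ℕ) : ℚ) • (pderiv i).toLinearMap) ^ (α i)).prod

/-- `f(∂) P`: substitute `p_i ↦ i·∂/∂p_i` in `f` and apply the result to `P`. -/
def Dop (f : Lam) (P : Lam) : Lam := ∑ α ∈ f.support, f.coeff α • monOp α P

/-- A bound for the weighted degree (`p_i` of weight `i`) of `P`;
`e_j(∂) P = 0 = h_j(∂) P` whenever `j > wbound P`. -/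
def wbound (P : Lam) : ℕ := P.support.sup fun α => α.sum fun i k => (i : ℕ) * k

/-- The vertex operator component `S_n = ∑_{j ≥ max(0,n)} (−1)^j h_{j−n} · e_j(∂)`;
on a given polynomial only the (finitely many) terms with `j ≤ wbound P` act nontrivially. -/
def Sop (n : ℤ) (P : Lam) : Lam :=
  ∑ j ∈ Finset.range (wbound P + 1),
    if n ≤ (j : ℤ) then ((-1 : ℚ)) ^ j • (hZ ((j : ℤ) - n) * Dop (ee j) P) else 0

/-- The dual vertex operator component `S*_n = ∑_{j ≥ max(0,−n)} (−1)^{j+n} e_{j+n} · h_j(∂)`. -/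
def SstarOp (n : ℤ) (P : Lam) : Lam :=
  ∑ j ∈ Finset.range (wbound P + 1),
    if -n ≤ (j : ℤ) then ((-1 : ℚ)) ^ ((j : ℤ) + n) • (eZ ((j : ℤ) + n) * Dop (hh j) P) else 0

/-- The Schur function of an arbitrary integer tuple, via the Jacobi–Trudi determinant
`s_ρ = det (h_{ρ_i − i + j})`. -/
def schur {l : ℕ} (ρ : Fin l → ℤ) : Lam :=
  (Matrix.of fun i j : Fin l => hZ (ρ i - (i.1 : ℤ) + (j.1 : ℤ))).det

/-- The dual Schur function of an integer tuple, `s_{ρ'} = det (e_{ρ_i − i + j})`. -/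
def schurE {l : ℕ} (ρ : Fin l → ℤ) : Lam :=
  (Matrix.of fun i j : Fin l => eZ (ρ i - (i.1 : ℤ) + (j.1 : ℤ))).det



/-! ### Generating functions -/

/-- The family `genFam c`, extended by zero to integer indices. -/
def gZ (c : ℕ → ℚ) (n : ℤ) : Lam := if 0 ≤ n then genFam c n.toNat else 0

/-- The weights of the dual family: `dual c = (n ↦ (-1)^{n+1} c n)` exchanges `h` and `e`. -/
def dual (c : ℕ → ℚ) (n : ℕ) : ℚ := (-1) ^ (n + 1) * c n

/-- The generating series `∑ g_k t^k` of `genFam c`. -/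
def gSeries (c : ℕ → ℚ) : PowerSeries Lam := PowerSeries.mk (genFam c)

/-- The logarithmic derivative `∑ c_{i+1} p_{i+1} t^i` of `gSeries c`. -/
def aSeries (c : ℕ → ℚ) : PowerSeries Lam :=
  PowerSeries.mk fun i => c (i + 1) • X i.succPNat

lemma gZ_natCast (c : ℕ → ℚ) (n : ℕ) : gZ c n = genFam c n := by simp [gZ]

lemma gZ_neg (c : ℕ → ℚ) {n : ℤ} (h : n < 0) : gZ c n = 0 := by simp [gZ, h]

lemma genFam_zero (c : ℕ → ℚ) : genFam c 0 = 1 := by rw [genFam]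

lemma gZ_zero (c : ℕ → ℚ) : gZ c 0 = 1 := by simp [gZ, genFam_zero]

lemma genFam_succ (c : ℕ → ℚ) (k : ℕ) :
    ((k : ℚ) + 1) • genFam c (k + 1) =
      ∑ i ∈ Finset.range (k + 1), c (i + 1) • (X i.succPNat * genFam c (k - i)) := by
  rw [genFam, smul_smul, mul_inv_cancel₀ (by positivity), one_smul]
  rfl

lemma derivative_gSeries (c : ℕ → ℚ) :
    PowerSeries.derivative Lam (gSeries c) = aSeries c * gSeries c := by
  ext1 k
  rw [PowerSeries.coeff_derivative, PowerSeries.coeff_mul,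
    Finset.Nat.sum_antidiagonal_eq_sum_range_succ_mk]
  have h := genFam_succ c k
  simp only [gSeries, aSeries, PowerSeries.coeff_mk, smul_mul_assoc]
  rw [← h, mul_comm, Algebra.smul_def]
  simp

lemma series_leibniz {R : Type*} [CommRing R] (F K : PowerSeries R) :
    PowerSeries.derivative R (F * K) =
      F * PowerSeries.derivative R K + K * PowerSeries.derivative R F := by
  rw [Derivation.leibniz, smul_eq_mul, smul_eq_mul]

lemma series_derivative_one_sub {R : Type*} [CommRing R] (x : R) :
    PowerSeries.derivative R (1 - PowerSeries.C x * PowerSeries.X) = -PowerSeries.C x := by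
  rw [map_sub, series_leibniz]
  simp

lemma series_coeff_zero_mul {R : Type*} [CommRing R] (F : PowerSeries R) (x : R) :
    PowerSeries.coeff 0 (F * (1 - PowerSeries.C x * PowerSeries.X)) = PowerSeries.coeff 0 F := by
  simp

/-- A power series over a `ℚ`-algebra solving `F' = A F` is determined by its constant term. -/
lemma series_unique {R : Type*} [CommRing R] [Algebra ℚ R] {A F K : PowerSeries R}
    (hF : PowerSeries.derivative R F = A * F) (hK : PowerSeries.derivative R K = A * K)
    (h0 : PowerSeries.coeff 0 F = PowerSeries.coeff 0 K) : F = K := by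
  ext1 n
  induction n using Nat.strong_induction_on with
  | _ n ih =>
    cases n with
    | zero => exact h0
    | succ k =>
      have h1 := congrArg (PowerSeries.coeff k) hF
      have h2 := congrArg (PowerSeries.coeff k) hK
      rw [PowerSeries.coeff_derivative, PowerSeries.coeff_mul] at h1 h2
      have h3 : PowerSeries.coeff (k + 1) F * ((k : R) + 1) =
          PowerSeries.coeff (k + 1) K * ((k : R) + 1) := by
        rw [h1, h2]
        refine Finset.sum_congr rfl fun p hp => ?_
        rw [ih p.2 (by have := Finset.HasAntidiagonal.mem_antidiagonal.1 hp; omega)]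
      have hu : IsUnit ((k : R) + 1) := by
        have : (k : R) + 1 = algebraMap ℚ R ((k : ℚ) + 1) := by simp
        rw [this]
        exact (IsUnit.mk0 _ (by positivity)).map _
      exact hu.mul_right_cancel h3

lemma genFam_neg_dual (c : ℕ → ℚ) (k : ℕ) :
    genFam (fun n => -dual c n) k = (-1 : ℚ) ^ k • genFam c k := by
  induction k using Nat.strong_induction_on with
  | _ k ih =>
    cases k with
    | zero => simp [genFam_zero]
    | succ k =>
      have hk : ((k : ℚ) + 1) ≠ 0 := by positivity
      apply smul_right_injective Lam hk
      simp only
      rw [smul_comm _ ((-1 : ℚ) ^ (k + 1)), genFam_succ, genFam_succ, Finset.smul_sum]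
      refine Finset.sum_congr rfl fun i hi => ?_
      have hi' : i ≤ k := by simpa [Nat.lt_succ_iff] using hi
      rw [ih (k - i) (by omega), mul_smul_comm, smul_smul, smul_smul]
      congr 1
      obtain ⟨d, rfl⟩ := Nat.exists_eq_add_of_le hi'
      simp only [dual, Nat.add_sub_cancel_left]
      ring

/-- The relation `∑ (-1)^i g_i g'_{n-i} = 0` for `n ≥ 1` between a family and its dual. -/
lemma alternating_sum_genFam (c : ℕ → ℚ) (n : ℕ) (hn : 0 < n) :
    ∑ i ∈ Finset.range (n + 1), (-1 : ℚ) ^ i • (genFam c i * genFam (dual c) (n - i)) = 0 := by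
  have h1 : gSeries (fun n => -dual c n) * gSeries (dual c) = 1 := by
    refine series_unique (A := 0) ?_ ?_ ?_
    · have h : aSeries (fun n => -dual c n) = -aSeries (dual c) := by
        ext1 i; simp [aSeries]
      rw [series_leibniz, derivative_gSeries, derivative_gSeries, h]
      ring
    · simp
    · rw [PowerSeries.coeff_mul]; simp [gSeries, genFam_zero]
  have h2 := congrArg (PowerSeries.coeff n) h1
  rw [PowerSeries.coeff_mul, Finset.Nat.sum_antidiagonal_eq_sum_range_succ_mk,
    PowerSeries.coeff_one, if_neg hn.ne'] at h2
  rw [← h2]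
  refine Finset.sum_congr rfl fun i _ => ?_
  simp [gSeries, genFam_neg_dual]

/-! ### The translation homomorphism -/

/-- The translation `p_n ↦ p_n - c_n z^n`, that is, `exp (-∑ c_n z^n ∂/∂p_n)`. -/
def shift (c : ℕ → ℚ) : Lam →ₐ[ℚ] Polynomial Lam :=
  aeval fun n : ℕ+ => Polynomial.C (X n) - c n • Polynomial.X ^ (n : ℕ)

lemma shift_X (c : ℕ → ℚ) (n : ℕ+) :
    shift c (X n) = Polynomial.C (X n) - c n • Polynomial.X ^ (n : ℕ) :=
  aeval_X _ n

lemma derivative_map_gSeries (c d : ℕ → ℚ) :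
    PowerSeries.derivative _ (PowerSeries.map (shift c).toRingHom (gSeries d)) =
      PowerSeries.map (shift c).toRingHom (aSeries d) *
        PowerSeries.map (shift c).toRingHom (gSeries d) := by
  rw [← map_mul, ← derivative_gSeries]
  ext1 n
  simp [PowerSeries.coeff_derivative]

lemma map_aSeries (c d : ℕ → ℚ) :
    PowerSeries.map (shift c).toRingHom (aSeries d) =
      PowerSeries.map Polynomial.C (aSeries d) -
        PowerSeries.mk fun i => (d (i + 1) * c (i + 1)) • (Polynomial.X : Polynomial Lam) ^ (i + 1) := by
  ext1 n
  simp [aSeries, shift_X, smul_sub, smul_smul, Polynomial.smul_C]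

lemma derivative_mapC_gSeries (d : ℕ → ℚ) :
    PowerSeries.derivative _ (PowerSeries.map (Polynomial.C (R := Lam)) (gSeries d)) =
      PowerSeries.map Polynomial.C (aSeries d) * PowerSeries.map Polynomial.C (gSeries d) := by
  rw [← map_mul, ← derivative_gSeries]
  ext1 n
  simp [PowerSeries.coeff_derivative]

lemma geom_aux {R : Type*} [CommRing R] (f : ℕ → R) (x : R) (hf : ∀ i, f (i + 1) = x * f i) :
    PowerSeries.mk f * (1 - PowerSeries.C x * PowerSeries.X) = PowerSeries.C (f 0) := by
  ext1 n
  rw [mul_sub, mul_one, ← mul_assoc, mul_comm _ (PowerSeries.C x), mul_assoc]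
  cases n with
  | zero => simp
  | succ n => simp [PowerSeries.coeff_succ_mul_X, hf]

/-- `shift c` sends `∑ g_k t^k` to `(1 - z t) ∑ g_k t^k`. -/
lemma map_gSeries (c : ℕ → ℚ) (hc : ∀ n, c n * c n = 1) :
    PowerSeries.map (shift c).toRingHom (gSeries c) =
      PowerSeries.map Polynomial.C (gSeries c) *
        (1 - PowerSeries.C Polynomial.X * PowerSeries.X) := by
  refine series_unique (derivative_map_gSeries c c) ?_ ?_
  · rw [map_aSeries, series_leibniz, series_derivative_one_sub, derivative_mapC_gSeries]
    have h := geom_aux (fun i => (c (i + 1) * c (i + 1)) • (Polynomial.X : Polynomial Lam) ^ (i + 1))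
      Polynomial.X (fun i => by simp [hc, pow_succ']) 
    simp only [hc, zero_add, pow_one, one_smul] at h ⊢
    linear_combination (PowerSeries.map Polynomial.C (gSeries c)) * h
  · rw [series_coeff_zero_mul, PowerSeries.coeff_map, PowerSeries.coeff_map]
    simp [gSeries, genFam_zero]

lemma neg_X_mul (Q : Polynomial Lam) : -Polynomial.X * Q = -(Polynomial.X * Q) := by ring

/-- `shift c` divides the generating series of the dual family by `1 + z t`. -/
lemma map_gSeries_dual (c : ℕ → ℚ) (hc : ∀ n, c n * c n = 1) :
    PowerSeries.map (shift c).toRingHom (gSeries (dual c)) *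
        (1 - PowerSeries.C (-Polynomial.X) * PowerSeries.X) =
      PowerSeries.map Polynomial.C (gSeries (dual c)) := by
  refine series_unique ?_ (derivative_mapC_gSeries (dual c)) ?_
  · rw [series_leibniz, series_derivative_one_sub, derivative_map_gSeries, map_aSeries]
    have hd : ∀ i, dual c (i + 1) * c (i + 1) = (-1) ^ i := fun i => by
      rw [dual, mul_assoc, hc]; ring
    have h := geom_aux (fun i => (dual c (i + 1) * c (i + 1)) •
      (Polynomial.X : Polynomial Lam) ^ (i + 1))
      (-Polynomial.X) (fun i => by
        rw [hd, hd, pow_succ (-1 : ℚ), mul_neg_one, neg_smul, mul_smul_comm, pow_succ' _ (i + 1),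
          neg_X_mul, smul_neg])
    simp only [hd, zero_add, pow_one, pow_zero, one_smul] at h ⊢
    simp only [map_neg] at h ⊢
    linear_combination (-PowerSeries.map (shift c).toRingHom (gSeries (dual c))) * h
  · rw [series_coeff_zero_mul, PowerSeries.coeff_map, PowerSeries.coeff_map]
    simp [gSeries, genFam_zero]

lemma shift_gZ (c : ℕ → ℚ) (hc : ∀ n, c n * c n = 1) (m : ℤ) :
    shift c (gZ c m) = Polynomial.C (gZ c m) - Polynomial.X * Polynomial.C (gZ c (m - 1)) := by
  rcases lt_or_ge m 0 with h | h
  · simp [gZ_neg c h, gZ_neg c (show m - 1 < 0 by omega)]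
  · obtain ⟨n, rfl⟩ := Int.eq_ofNat_of_zero_le h
    have h := congrArg (PowerSeries.coeff n) (map_gSeries c hc)
    rw [mul_sub, mul_one, ← mul_assoc, mul_comm _ (PowerSeries.C _), mul_assoc, map_sub,
      PowerSeries.coeff_C_mul] at h
    cases n with
    | zero => simp [gZ_neg, gZ_zero]
    | succ n =>
      rw [show (((n + 1 : ℕ) : ℤ) - 1) = (n : ℕ) by push_cast; ring, gZ_natCast, gZ_natCast]
      simpa [gSeries, PowerSeries.coeff_succ_mul_X] using h

lemma shift_gZ_dual (c : ℕ → ℚ) (hc : ∀ n, c n * c n = 1) (m : ℤ) :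
    shift c (gZ (dual c) m) + Polynomial.X * shift c (gZ (dual c) (m - 1)) =
      Polynomial.C (gZ (dual c) m) := by
  rcases lt_or_ge m 0 with h | h
  · simp [gZ_neg _ h, gZ_neg _ (show m - 1 < 0 by omega)]
  · obtain ⟨n, rfl⟩ := Int.eq_ofNat_of_zero_le h
    have h := congrArg (PowerSeries.coeff n) (map_gSeries_dual c hc)
    rw [mul_sub, mul_one, ← mul_assoc, mul_comm _ (PowerSeries.C _), mul_assoc, map_sub,
      PowerSeries.coeff_C_mul] at h
    cases n with
    | zero => simp [gZ_neg, gZ_zero]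
    | succ n =>
      rw [show (((n + 1 : ℕ) : ℤ) - 1) = (n : ℕ) by push_cast; ring, gZ_natCast, gZ_natCast]
      rw [neg_X_mul, sub_neg_eq_add] at h
      simpa [gSeries, PowerSeries.coeff_succ_mul_X] using h

/-! ### Differential operators with constant coefficients -/

/-- The operator `i ∂/∂p_i` adjoint to multiplication by `p_i`. -/
def dd (i : ℕ+) : Module.End ℚ Lam := ((i : ℕ) : ℚ) • (pderiv i).toLinearMap

lemma pderiv_swap (i j : ℕ+) (P : Lam) : pderiv i (pderiv j P) = pderiv j (pderiv i P) := by
  have h : ⁅(pderiv i : Derivation ℚ Lam Lam), (pderiv j : Derivation ℚ Lam Lam)⁆ = 0 := by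
    refine MvPolynomial.derivation_ext fun k => ?_
    rw [Derivation.commutator_apply]
    simp only [pderiv_X, Derivation.zero_apply, Pi.single_apply]
    split_ifs <;> simp
  have h2 := DFunLike.congr_fun h P
  rw [Derivation.commutator_apply] at h2
  exact sub_eq_zero.1 h2

lemma dd_apply (i : ℕ+) (P : Lam) : dd i P = ((i : ℕ) : ℚ) • pderiv i P := rfl

lemma dd_commute (i j : ℕ+) : dd i * dd j = dd j * dd i := by
  refine LinearMap.ext fun P => ?_
  change dd i (dd j P) = dd j (dd i P)
  rw [dd_apply, dd_apply, dd_apply, dd_apply, Derivation.map_smul, Derivation.map_smul,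
    pderiv_swap i j, smul_comm]

lemma dd_range_commute : ∀ a ∈ Set.range dd, ∀ b ∈ Set.range dd, a * b = b * a := by
  rintro _ ⟨i, rfl⟩ _ ⟨j, rfl⟩
  exact dd_commute i j

open scoped IsMulCommutative in
/-- The substitution `p_i ↦ i ∂/∂p_i` is multiplicative, the operators `i ∂/∂p_i` generating a
commutative algebra. -/
lemma exists_Dop_algHom : ∃ Ψ : Lam →ₐ[ℚ] Module.End ℚ Lam,
    (∀ f P, Dop f P = Ψ f P) ∧ ∀ i, Ψ (X i) = dd i := by
  have := Algebra.isMulCommutative_adjoin ℚ dd_range_commute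
  let : CommSemiring (Algebra.adjoin ℚ (Set.range dd)) := inferInstance
  let d' : ℕ+ → Algebra.adjoin ℚ (Set.range dd) :=
    fun i => ⟨dd i, Algebra.subset_adjoin ⟨i, rfl⟩⟩
  let Φ : Lam →ₐ[ℚ] Algebra.adjoin ℚ (Set.range dd) := aeval d'
  refine ⟨(Algebra.adjoin ℚ (Set.range dd)).val.comp Φ, fun f P => ?_, fun i => ?_⟩
  · have hmon : ∀ α : ℕ+ →₀ ℕ, monOp α =
        (Algebra.adjoin ℚ (Set.range dd)).val (∏ i ∈ α.support, d' i ^ α i) := by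
      intro α
      have : (∏ i ∈ α.support, d' i ^ α i) =
          ((α.support.sort (· ≤ ·)).map fun i => d' i ^ α i).prod := by
        rw [← Multiset.prod_coe, ← Multiset.map_coe, Finset.sort_eq]
        rfl
      rw [this, map_list_prod, List.map_map]
      rfl
    have hΦ : Φ f = ∑ α ∈ f.support, f.coeff α • ∏ i ∈ α.support, d' i ^ α i := by
      change aeval d' f = _
      rw [aeval_def, eval₂_eq]
      exact Finset.sum_congr rfl fun α _ => (Algebra.smul_def _ _).symm
    rw [AlgHom.comp_apply, hΦ, map_sum, LinearMap.sum_apply, Dop]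
    refine Finset.sum_congr rfl fun α _ => ?_
    rw [hmon, map_smul, LinearMap.smul_apply]
  · rw [AlgHom.comp_apply]
    change (Algebra.adjoin ℚ (Set.range dd)).val (aeval d' (X i)) = _
    rw [aeval_X]
    rfl

lemma Dop_genFam_succ (c : ℕ → ℚ) (k : ℕ) (P : Lam) :
    ((k : ℚ) + 1) • Dop (genFam c (k + 1)) P =
      ∑ i ∈ Finset.range (k + 1), c (i + 1) •
        Dop (genFam c (k - i)) (dd i.succPNat P) := by
  obtain ⟨Ψ, h1, h2⟩ := exists_Dop_algHom
  simp only [h1]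
  rw [← LinearMap.smul_apply, ← map_smul, genFam_succ, map_sum, LinearMap.sum_apply]
  refine Finset.sum_congr rfl fun i _ => ?_
  rw [map_smul, mul_comm, map_mul, LinearMap.smul_apply, Module.End.mul_apply, h2]

lemma Dop_one (P : Lam) : Dop 1 P = P := by
  obtain ⟨Ψ, h1, -⟩ := exists_Dop_algHom
  rw [h1, map_one, Module.End.one_apply]

lemma shift_C (c : ℕ → ℚ) (a : ℚ) : shift c (C a) = Polynomial.C (C a) := by
  change aeval _ (C a) = _
  rw [aeval_C]
  rfl

/-- The chain rule for `shift c P` as a function of `z`, stated with any sufficiently long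
range of summation since only finitely many variables occur in `P`. -/
lemma derivative_shift (c : ℕ → ℚ) (P : Lam) : ∃ N₀ : ℕ, ∀ N ≥ N₀,
    Polynomial.derivative (shift c P) =
      -∑ i ∈ Finset.range N, c (i + 1) •
        (Polynomial.X ^ i * shift c (dd i.succPNat P)) := by
  induction P using MvPolynomial.induction_on with
  | C a =>
    refine ⟨0, fun N _ => ?_⟩
    rw [shift_C]
    simp [dd_apply]
  | add P Q hP hQ =>
    obtain ⟨N₁, h₁⟩ := hP
    obtain ⟨N₂, h₂⟩ := hQ
    refine ⟨max N₁ N₂, fun N hN => ?_⟩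
    rw [map_add, map_add, h₁ N (by omega), h₂ N (by omega), ← neg_add, ← Finset.sum_add_distrib]
    simp only [map_add, mul_add, smul_add]
  | mul_X P m hP =>
    obtain ⟨N₁, h₁⟩ := hP
    refine ⟨max N₁ m, fun N hN => ?_⟩
    have hm : (m : ℕ) - 1 ∈ Finset.range N := by
      have := m.pos
      simp only [Finset.mem_range]; omega
    have hX : Polynomial.derivative (shift c (X m)) =
        -∑ i ∈ Finset.range N, c (i + 1) •
          (Polynomial.X ^ i * shift c (dd i.succPNat (X m))) := by
      rw [Finset.sum_eq_single_of_mem _ hm]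
      · have e : ((m : ℕ) - 1).succPNat = m := by
          apply PNat.eq; have := m.pos; simp only [Nat.succPNat_coe]; omega
        have e' : (m : ℕ) - 1 + 1 = m := by have := m.pos; omega
        rw [e, e', shift_X, dd_apply, pderiv_X_self, map_smul, map_one, map_sub,
          Polynomial.derivative_C, zero_sub, Polynomial.derivative_smul,
          Polynomial.derivative_X_pow, mul_smul_comm, mul_one, Algebra.smul_def ((m : ℕ) : ℚ)]
        simp
      · intro i _ hi
        have : m ≠ i.succPNat := by
          rintro rfl; simp at hi
        rw [dd_apply, pderiv_X_of_ne this]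
        simp
    have hS : ∑ i ∈ Finset.range N, c (i + 1) •
          (Polynomial.X ^ i * shift c (dd i.succPNat (P * X m))) =
        (∑ i ∈ Finset.range N, c (i + 1) • (Polynomial.X ^ i * shift c (dd i.succPNat P))) *
          shift c (X m) + shift c P *
        ∑ i ∈ Finset.range N, c (i + 1) • (Polynomial.X ^ i * shift c (dd i.succPNat (X m))) := by
      rw [Finset.sum_mul, Finset.mul_sum, ← Finset.sum_add_distrib]
      refine Finset.sum_congr rfl fun i _ => ?_
      have : dd i.succPNat (P * X m) =
          dd i.succPNat P * X m + P * dd i.succPNat (X m) := by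
        simp only [dd_apply, Derivation.leibniz, smul_eq_mul, Algebra.smul_def]
        ring
      rw [this, map_add, map_mul, map_mul]
      simp only [Algebra.smul_def]
      ring
    rw [hS, map_mul, Polynomial.derivative_mul, hX, h₁ N (by omega)]
    ring

lemma coeff_shift_succ (c : ℕ → ℚ) (P : Lam) (k : ℕ) :
    ((k : ℚ) + 1) • (shift c P).coeff (k + 1) =
      -∑ i ∈ Finset.range (k + 1), c (i + 1) •
        (shift c (dd i.succPNat P)).coeff (k - i) := by
  obtain ⟨N₀, h⟩ := derivative_shift c P
  have h1 := congrArg (fun Q => Polynomial.coeff Q k) (h (max N₀ (k + 1)) (le_max_left _ _))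
  simp only [Polynomial.coeff_derivative, Polynomial.coeff_neg, Polynomial.finsetSum_coeff,
    Polynomial.coeff_smul, Polynomial.coeff_X_pow_mul'] at h1
  rw [Algebra.smul_def, mul_comm]
  simp only [map_add, map_natCast, map_one]
  rw [h1]
  congr 1
  symm
  refine (Finset.sum_congr rfl fun i hi => ?_).trans
    (Finset.sum_subset (Finset.range_subset_range.2 (le_max_right N₀ (k + 1))) fun i _ hi => ?_)
  · rw [if_pos (by simpa [Nat.lt_succ_iff] using hi)]
  · rw [if_neg (by simpa [Nat.lt_succ_iff] using hi), smul_zero]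

/-- `exp (-∑ c_n z^n ∂/∂p_n) = ∑_j (-z)^j g'_j(∂)`, with `g'` the family dual to `genFam c`. -/
lemma coeff_shift (c : ℕ → ℚ) (j : ℕ) (P : Lam) :
    (shift c P).coeff j = (-1 : ℚ) ^ j • Dop (genFam (dual c) j) P := by
  induction j using Nat.strong_induction_on generalizing P with
  | _ j ih =>
    cases j with
    | zero =>
      rw [genFam_zero, Dop_one, pow_zero, one_smul]
      induction P using MvPolynomial.induction_on with
      | C a =>
        rw [shift_C, Polynomial.coeff_C_zero]
      | add P Q hP hQ => rw [map_add, Polynomial.coeff_add, hP, hQ]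
      | mul_X P m hP =>
        rw [map_mul, Polynomial.mul_coeff_zero, hP, shift_X]
        simp [m.ne_zero.symm]
    | succ k =>
      have hk : ((k : ℚ) + 1) ≠ 0 := by positivity
      apply smul_right_injective Lam hk
      simp only
      rw [coeff_shift_succ, smul_comm, Dop_genFam_succ, Finset.smul_sum, ← Finset.sum_neg_distrib]
      refine Finset.sum_congr rfl fun i hi => ?_
      have hi' : i ≤ k := by simpa [Nat.lt_succ_iff] using hi
      rw [ih (k - i) (by omega), smul_smul, smul_smul, ← neg_smul]
      congr 1
      obtain ⟨d, rfl⟩ := Nat.exists_eq_add_of_le hi'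
      simp only [dual, Nat.add_sub_cancel_left]
      ring_nf
      simp [pow_mul, ← pow_mul']

lemma natDegree_shift_le (c : ℕ → ℚ) (P : Lam) : (shift c P).natDegree ≤ wbound P := by
  have h : shift c P = ∑ α ∈ P.support, P.coeff α •
      ∏ i ∈ α.support, (Polynomial.C (X i) - c i • Polynomial.X ^ (i : ℕ)) ^ α i := by
    change aeval _ P = _
    rw [aeval_def, eval₂_eq]
    exact Finset.sum_congr rfl fun α _ => (Algebra.smul_def _ _).symm
  rw [h]
  refine Polynomial.natDegree_sum_le_of_forall_le _ _ fun α hα => ?_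
  refine (Polynomial.natDegree_smul_le _ _).trans ?_
  refine le_trans ?_ (Finset.le_sup (f := fun α : ℕ+ →₀ ℕ => α.sum fun i k => (i : ℕ) * k) hα)
  refine (Polynomial.natDegree_prod_le _ _).trans (Finset.sum_le_sum fun i _ => ?_)
  refine Polynomial.natDegree_pow_le.trans ?_
  rw [mul_comm]
  refine Nat.mul_le_mul_right _ ((Polynomial.natDegree_sub_le _ _).trans ?_)
  simp only [Polynomial.natDegree_C, zero_le, sup_of_le_right]
  exact (Polynomial.natDegree_smul_le _ _).trans (Polynomial.natDegree_X_pow_le _)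

/-! ### Vertex operators -/

/-- The `Λ`-linear functional on `Λ[z]` sending `z^j` to `g_{n+j}`. -/
def phi (c : ℕ → ℚ) (n : ℤ) : Polynomial Lam →ₗ[Lam] Lam :=
  Polynomial.lsum fun j => LinearMap.mulRight Lam (gZ c (n + j))

lemma phi_monomial (c : ℕ → ℚ) (n : ℤ) (j : ℕ) (a : Lam) :
    phi c n (Polynomial.monomial j a) = a * gZ c (n + j) := by
  simp [phi]

lemma phi_C_mul (c : ℕ → ℚ) (n : ℤ) (a : Lam) (Q : Polynomial Lam) :
    phi c n (Polynomial.C a * Q) = a * phi c n Q := by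
  rw [Polynomial.C_mul', map_smul, smul_eq_mul]

lemma phi_C (c : ℕ → ℚ) (n : ℤ) (a : Lam) : phi c n (Polynomial.C a) = a * gZ c n := by
  have := phi_monomial c n 0 a
  simpa using this

lemma phi_one (c : ℕ → ℚ) (n : ℤ) : phi c n 1 = gZ c n := by
  rw [← Polynomial.C_1, phi_C, one_mul]

lemma phi_X_mul (c : ℕ → ℚ) (n : ℤ) (Q : Polynomial Lam) :
    phi c n (Polynomial.X * Q) = phi c (n + 1) Q := by
  induction Q using Polynomial.induction_on' with
  | add p q hp hq => rw [mul_add, map_add, map_add, hp, hq]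
  | monomial j a =>
    rw [Polynomial.X_mul_monomial, phi_monomial, phi_monomial]
    congr 2
    push_cast
    ring

lemma phi_eq_sum (c : ℕ → ℚ) (n : ℤ) (Q : Polynomial Lam) {N : ℕ} (hN : Q.natDegree < N) :
    phi c n Q = ∑ j ∈ Finset.range N, Q.coeff j * gZ c (n + j) := by
  conv_lhs => rw [Q.as_sum_range' N hN]
  rw [map_sum]
  simp only [phi_monomial]

/-- The vertex operator `∑_j (-1)^j g_{n+j} g'_j(∂)`. For `c = 1` this is `S_{-n}`, and for
`c = (-1)^{n+1}` it is `(-1)^n S*_n`. -/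
def vop (c : ℕ → ℚ) (n : ℤ) (P : Lam) : Lam := phi c n (shift c P)

lemma vop_smul (c : ℕ → ℚ) (n : ℤ) (a : ℚ) (P : Lam) : vop c n (a • P) = a • vop c n P := by
  rw [vop, map_smul, vop, ← IsScalarTower.algebraMap_smul Lam a, map_smul,
    IsScalarTower.algebraMap_smul]

lemma vop_eq_sum (c : ℕ → ℚ) (n : ℤ) (P : Lam) :
    vop c n P = ∑ j ∈ Finset.range (wbound P + 1),
      (-1 : ℚ) ^ j • (gZ c (n + j) * Dop (genFam (dual c) j) P) := by
  rw [vop, phi_eq_sum c n _ (Nat.lt_succ_of_le (natDegree_shift_le c P))]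
  refine Finset.sum_congr rfl fun j _ => ?_
  rw [coeff_shift, smul_mul_assoc, mul_comm]

/-- The weights `(-1)^{n+1}` of the elementary symmetric functions. -/
def cE (n : ℕ) : ℚ := (-1) ^ (n + 1)

/-- The weights `1` of the complete homogeneous symmetric functions. -/
def cH (_ : ℕ) : ℚ := 1

lemma dual_cH : dual cH = cE := by
  funext n; simp [dual, cH, cE]

lemma dual_cE : dual cE = cH := by
  funext n; simp [dual, cH, cE, ← mul_pow]

lemma cH_sq (n : ℕ) : cH n * cH n = 1 := by simp [cH]

lemma cE_sq (n : ℕ) : cE n * cE n = 1 := by simp [cE, ← mul_pow]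

lemma Sop_eq_vop (n : ℤ) (P : Lam) : Sop (-n) P = vop cH n P := by
  rw [vop_eq_sum, Sop]
  refine Finset.sum_congr rfl fun j _ => ?_
  rw [dual_cH]
  split_ifs with h
  · rw [sub_neg_eq_add, add_comm]
    rfl
  · rw [gZ_neg _ (by omega), zero_mul, smul_zero]

lemma SstarOp_eq_vop (n : ℕ) (P : Lam) : SstarOp n P = (-1 : ℚ) ^ n • vop cE n P := by
  rw [vop_eq_sum, SstarOp, Finset.smul_sum]
  refine Finset.sum_congr rfl fun j _ => ?_
  rw [dual_cE, if_pos (by omega), smul_smul, ← pow_add, add_comm (j : ℤ), ← Nat.cast_add,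
    zpow_natCast, Nat.cast_add]
  rfl

/-! ### Jacobi–Trudi determinants -/

/-- The Jacobi–Trudi determinant of an integer tuple for the family `genFam c`. -/
def jt (c : ℕ → ℚ) {l : ℕ} (ρ : Fin l → ℤ) : Lam :=
  (Matrix.of fun i j : Fin l => gZ c (ρ i - (i.1 : ℤ) + (j.1 : ℤ))).det

lemma jt_cast (c : ℕ → ℚ) {l m : ℕ} (h : l = m) (ρ : Fin m → ℤ) :
    jt c (fun i : Fin l => ρ (Fin.cast h i)) = jt c ρ := by
  subst h
  rfl

/-- Bernstein's formula: a vertex operator prepends an entry to a Jacobi–Trudi determinant. -/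
lemma vop_jt (c : ℕ → ℚ) (hc : ∀ n, c n * c n = 1) (n : ℤ) {l : ℕ} (ρ : Fin l → ℤ) :
    vop c n (jt c ρ) = jt c (Fin.cons n ρ : Fin (l + 1) → ℤ) := by
  -- the matrix of `(n, ρ)` with its first row replaced by the powers of `z`
  let M : Matrix (Fin (l + 1)) (Fin (l + 1)) (Polynomial Lam) := Matrix.of fun i j =>
    (Fin.cons (Polynomial.X ^ (j : ℕ))
      (fun i' : Fin l => Polynomial.C (gZ c (ρ i' - ((i' : ℕ) + 1 : ℤ) + (j : ℕ)))) :
        Fin (l + 1) → Polynomial Lam) i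
  let B : Matrix (Fin (l + 1)) (Fin (l + 1)) (Polynomial Lam) := Matrix.of fun i j =>
    (Fin.cons ((Fin.cons 1 fun _ => 0 : Fin (l + 1) → Polynomial Lam) j)
      (fun i' : Fin l => (Fin.cons (M i'.succ 0)
        fun j' : Fin l => shift c (gZ c (ρ i' - (i' : ℕ) + (j' : ℕ))) :
          Fin (l + 1) → Polynomial Lam) j) : Fin (l + 1) → Polynomial Lam) i
  have h1 : M.det = B.det := by
    refine Matrix.det_eq_of_forall_col_eq_smul_add_pred (fun _ => Polynomial.X) ?_ ?_
    · intro i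
      refine Fin.cases ?_ (fun i => ?_) i
      · simp [M, B]
      · simp [B]
    · intro i j
      refine Fin.cases ?_ (fun i => ?_) i
      · simp [M, B, pow_succ']
      · simp only [M, B, Matrix.of_apply, Fin.cons_succ, shift_gZ c hc, Fin.val_succ,
          Fin.val_castSucc]
        rw [show ρ i - ((i : ℕ) + 1 : ℤ) + ((j : ℕ) + 1 : ℕ) = ρ i - (i : ℕ) + (j : ℕ) by
            push_cast; ring,
          show ρ i - ((i : ℕ) + 1 : ℤ) + (j : ℕ) = ρ i - (i : ℕ) + (j : ℕ) - 1 by ring]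
        ring
  have h2 : B.det = shift c (jt c ρ) := by
    rw [Matrix.det_succ_row_zero, Fin.sum_univ_succ]
    have h0 : ∀ j : Fin l, B 0 j.succ = 0 := fun j => by simp [B]
    have h00 : B 0 0 = 1 := by simp [B]
    simp only [h0, h00, mul_zero, zero_mul, Finset.sum_const_zero, add_zero, Fin.val_zero, pow_zero,
      one_mul]
    rw [jt, AlgHom.map_det]
    congr 1
  have h3 : ∀ j : Fin (l + 1), (M.submatrix Fin.succ j.succAbove).det =
      Polynomial.C (((Matrix.of fun i j : Fin (l + 1) =>
        gZ c ((Fin.cons n ρ : Fin (l + 1) → ℤ) i - (i.1 : ℤ) + (j.1 : ℤ))).submatrix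
          Fin.succ j.succAbove).det) := by
    intro j
    rw [RingHom.map_det]
    congr 1
  rw [vop, ← h2, ← h1, jt, Matrix.det_succ_row_zero, Matrix.det_succ_row_zero, map_sum]
  refine Finset.sum_congr rfl fun j _ => ?_
  have h4 : (-1 : Polynomial Lam) ^ (j : ℕ) = Polynomial.C ((-1) ^ (j : ℕ)) := by simp
  have h5 : M 0 j = Polynomial.monomial (j : ℕ) 1 := by
    simp [M, Polynomial.monomial_one_right_eq_X_pow]
  rw [h3, h4, mul_assoc, phi_C_mul, h5, mul_comm (Polynomial.monomial _ _), phi_C_mul,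
    phi_monomial]
  simp only [Matrix.of_apply, Fin.cons_zero, Fin.val_zero, Nat.cast_zero, sub_zero]
  ring

lemma phi_shift_dual_succ (c : ℕ → ℚ) (hc : ∀ n, c n * c n = 1) (n x : ℤ) :
    phi c (n + 1) (shift c (gZ (dual c) x)) =
      gZ (dual c) (x + 1) * gZ c n - phi c n (shift c (gZ (dual c) (x + 1))) := by
  have h := congrArg (phi c n) (shift_gZ_dual c hc (x + 1))
  rw [add_sub_cancel_right, map_add, phi_X_mul, phi_C] at h
  rw [← h]
  ring

lemma phi_shift_dual (c : ℕ → ℚ) (hc : ∀ n, c n * c n = 1) (x : ℕ) (n : ℤ) :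
    phi c n (shift c (gZ (dual c) x)) =
      ∑ i ∈ Finset.range (x + 1), (-1) ^ i * (gZ c (n + i) * gZ (dual c) ((x - i : ℕ) : ℤ)) := by
  induction x generalizing n with
  | zero => simp [gZ_zero, phi_one]
  | succ x ih =>
    have h := phi_shift_dual_succ c hc n x
    rw [ih] at h
    rw [Finset.sum_range_succ']
    rw [eq_sub_iff_add_eq, ← eq_sub_iff_add_eq'] at h
    push_cast at h ⊢
    rw [h, sub_eq_add_neg, add_comm, ← Finset.sum_neg_distrib]
    congr 1
    · refine Finset.sum_congr rfl fun i _ => ?_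
      rw [show n + ((i : ℤ) + 1) = n + 1 + i by ring]
      ring
    · simp [mul_comm]

/-- The coefficients of the column operation in `vop_dual_jt`. -/
lemma phi_shift_dual_eq (c : ℕ → ℚ) (hc : ∀ n, c n * c n = 1) (n : ℕ) (x : ℤ) (hx : 1 ≤ x + n) :
    phi c n (shift c (gZ (dual c) x)) =
      (-1) ^ (n + 1) * ∑ i ∈ Finset.range n, (-1) ^ i * (gZ c i * gZ (dual c) (x + n - i)) := by
  induction n generalizing x with
  | zero =>
    obtain ⟨y, rfl⟩ := Int.eq_ofNat_of_zero_le (show 0 ≤ x by omega)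
    have h := alternating_sum_genFam c y (by omega)
    rw [Nat.cast_zero, phi_shift_dual c hc]
    simp only [Finset.range_zero, Finset.sum_empty, mul_zero]
    rw [← h]
    refine Finset.sum_congr rfl fun i _ => ?_
    rw [zero_add, gZ_natCast, gZ_natCast, Algebra.smul_def]
    simp
  | succ n ih =>
    push_cast at hx ⊢
    rw [phi_shift_dual_succ c hc, ih (x + 1) (by omega), Finset.sum_range_succ]
    rw [show x + ((n : ℤ) + 1) - n = x + 1 by ring]
    simp only [show ∀ i : ℕ, x + 1 + (n : ℤ) - i = x + ((n : ℤ) + 1) - i from fun i => by ring]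
    have h : ((-1) ^ n * (-1) ^ n : Lam) = 1 := by rw [← mul_pow]; simp
    linear_combination (-gZ c n * gZ (dual c) (x + 1)) * h

/-- `phi_shift_dual_eq` with the summands indexed by the columns that they multiply. -/
lemma phi_shift_dual_fin (c : ℕ → ℚ) (hc : ∀ n, c n * c n = 1) (m : ℕ) (x : ℤ)
    (hx : 1 ≤ x + (m + 1 : ℕ)) :
    phi c ((m + 1 : ℕ) : ℤ) (shift c (gZ (dual c) x)) =
      (-1) ^ m * gZ (dual c) (x + (m + 1 : ℕ)) +
        ∑ j : Fin m, (-1) ^ m * ((-1) ^ (m - (j : ℕ)) * gZ c ((m - (j : ℕ) : ℕ) : ℤ)) *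
          gZ (dual c) (x + (j.succ : ℕ)) := by
  rw [phi_shift_dual_eq c hc _ _ hx, Finset.sum_range_succ', ← Finset.sum_range_reflect,
    ← Fin.sum_univ_eq_sum_range (fun j => (-1 : Lam) ^ (m - 1 - j + 1) *
      (gZ c ((m - 1 - j + 1 : ℕ) : ℤ) *
        gZ (dual c) (x + ((m + 1 : ℕ) : ℤ) - ((m - 1 - j + 1 : ℕ) : ℤ)))),
    mul_add, add_comm, Finset.mul_sum]
  congr 1
  · simp [gZ_zero, pow_succ]
  · refine Finset.sum_congr rfl fun j _ => ?_
    have hj := j.2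
    rw [show m - 1 - (j : ℕ) + 1 = m - (j : ℕ) by omega,
      show x + ((m + 1 : ℕ) : ℤ) - ((m - (j : ℕ) : ℕ) : ℤ) = x + (j.succ : ℕ) by
        rw [Fin.val_succ]; omega]
    ring

/-- `phi` passes through a determinant only one of whose columns involves `z`. -/
lemma phi_det (c : ℕ → ℚ) (n : ℤ) {m : ℕ} (B : Matrix (Fin (m + 1)) (Fin (m + 1)) (Polynomial Lam))
    (N : Matrix (Fin (m + 1)) (Fin (m + 1)) Lam) (h0 : ∀ i, phi c n (B i 0) = N i 0)
    (hs : ∀ i (j : Fin m), B i j.succ = Polynomial.C (N i j.succ)) :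
    phi c n B.det = N.det := by
  rw [Matrix.det_succ_column_zero, Matrix.det_succ_column_zero, map_sum]
  refine Finset.sum_congr rfl fun i _ => ?_
  have e1 : (B.submatrix i.succAbove Fin.succ).det =
      Polynomial.C ((N.submatrix i.succAbove Fin.succ).det) := by
    rw [RingHom.map_det]
    congr 1
    ext1 a b
    exact hs _ _
  have e2 : (-1 : Polynomial Lam) ^ (i : ℕ) = Polynomial.C ((-1) ^ (i : ℕ)) := by simp
  rw [e1, e2, mul_assoc, phi_C_mul, mul_comm (B i 0), phi_C_mul, h0]
  ring

/-- On a determinant of length `n` with nonnegative entries in the dual family, the vertex operator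
of index `n` adds one to every entry. -/
lemma vop_dual_jt (c : ℕ → ℚ) (hc : ∀ n, c n * c n = 1) {n : ℕ} (ρ : Fin n → ℤ)
    (hρ : ∀ i, 0 ≤ ρ i) :
    vop c n (jt (dual c) ρ) = jt (dual c) (fun i => ρ i + 1) := by
  cases n with
  | zero =>
    simp [jt, vop, gZ_zero, phi_one]
  | succ m =>
    let g := gZ (dual c)
    let B : Matrix (Fin (m + 1)) (Fin (m + 1)) (Polynomial Lam) := Matrix.of fun i j =>
      (Fin.cons (shift c (g (ρ i - (i : ℕ))))
        fun j' : Fin m => Polynomial.C (g (ρ i - (i : ℕ) + (j'.succ : ℕ))) :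
          Fin (m + 1) → Polynomial Lam) j
    have h1 : shift c (jt (dual c) ρ) = B.det := by
      rw [jt, AlgHom.map_det]
      refine Matrix.det_eq_of_forall_col_eq_smul_add_pred (fun _ => -Polynomial.X) ?_ ?_
      · intro i
        simp [B, g]
      · intro i j
        have h := shift_gZ_dual c hc (ρ i - (i : ℕ) + ((j : ℕ) + 1 : ℕ))
        rw [show ρ i - (i : ℕ) + ((j : ℕ) + 1 : ℕ) - 1 = ρ i - (i : ℕ) + (j : ℕ) by
          push_cast; ring] at h
        simp only [AlgHom.mapMatrix_apply, Matrix.map_apply, Matrix.of_apply, B, g, Fin.cons_succ,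
          Fin.val_succ, Fin.val_castSucc]
        rw [← h]
        ring
    -- the columns of the target determinant, rotated so that the last one comes first
    let K : Matrix (Fin (m + 1)) (Fin (m + 1)) Lam := Matrix.of fun i j =>
      g (ρ i + 1 - (i : ℕ) + (j : ℕ))
    let N : Matrix (Fin (m + 1)) (Fin (m + 1)) Lam := K.submatrix id ((finRotate (m + 1))⁻¹ : Equiv.Perm (Fin (m + 1)))
    have hN0 : ∀ i, N i 0 = g (ρ i - (i : ℕ) + (m + 1 : ℕ)) := by
      intro i
      have : (finRotate (m + 1))⁻¹ 0 = Fin.last m := by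
        rw [Equiv.Perm.inv_eq_iff_eq, finRotate_last]
      simp only [N, Matrix.submatrix_apply, this, id, K, Matrix.of_apply, Fin.val_last]
      congr 1
      push_cast
      ring
    have hNs : ∀ i (j : Fin m), N i j.succ = g (ρ i - (i : ℕ) + (j.succ : ℕ)) := by
      intro i j
      have : (finRotate (m + 1))⁻¹ j.succ = j.castSucc := by
        rw [Equiv.Perm.inv_eq_iff_eq]
        apply Fin.ext
        rw [finRotate_of_lt (by simp)]
        simp
      simp only [N, Matrix.submatrix_apply, this, id, K, Matrix.of_apply, Fin.val_castSucc,
        Fin.val_succ]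
      congr 1
      push_cast
      ring
    let u : Fin (m + 1) → Lam := fun j =>
      (Fin.cons ((-1) ^ m) fun j' : Fin m =>
        (-1) ^ m * ((-1) ^ (m - (j' : ℕ)) * gZ c ((m - (j' : ℕ) : ℕ) : ℤ)) : Fin (m + 1) → Lam) j
    have h2 : phi c ((m + 1 : ℕ) : ℤ) B.det =
        (N.updateCol 0 fun k => ∑ i, u i • N k i).det := by
      refine phi_det c _ B _ (fun i => ?_) (fun i j => ?_)
      · have hi := hρ i
        have hi' := i.2
        rw [Matrix.updateCol_self, Fin.sum_univ_succ]
        simp only [hN0, hNs, u, Fin.cons_zero, Fin.cons_succ, smul_eq_mul]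
        exact phi_shift_dual_fin c hc m _ (by omega)
      · rw [Matrix.updateCol_ne (Fin.succ_ne_zero j), hNs]
        rfl
    have h3 : N.det = (-1) ^ m * K.det := by
      rw [Matrix.det_permute', Equiv.Perm.sign_inv, sign_finRotate]
      simp
    rw [vop, h1, h2, Matrix.det_updateCol_sum, h3, smul_eq_mul, ← mul_assoc]
    have : u 0 * (-1) ^ m = 1 := by
      change (-1 : Lam) ^ m * (-1) ^ m = 1
      rw [← mul_pow]; simp
    rw [this, one_mul]
    rfl

lemma jt_of_last_eq_zero (c : ℕ → ℚ) {m : ℕ} (ρ : Fin (m + 1) → ℤ) (h : ρ (Fin.last m) = 0) :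
    jt c ρ = jt c (fun i : Fin m => ρ i.castSucc) := by
  rw [jt, Matrix.det_succ_row _ (Fin.last m), Fin.sum_univ_castSucc]
  have h0 : ∀ j : Fin m, gZ c (ρ (Fin.last m) - ((Fin.last m : Fin (m + 1)) : ℕ) +
      ((j.castSucc : Fin (m + 1)) : ℕ)) = 0 := by
    intro j
    have := j.2
    refine gZ_neg c ?_
    rw [h, Fin.val_last, Fin.val_castSucc]
    omega
  simp only [Matrix.of_apply, h0, mul_zero, zero_mul, Finset.sum_const_zero, zero_add]
  rw [h, zero_sub, neg_add_cancel, gZ_zero, Fin.succAbove_last, Even.neg_one_pow ⟨_, rfl⟩, one_mul,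
    one_mul]
  rfl

/-- The conjugate of `ν`, as a tuple of prescribed length `N`. -/
def conj {k : ℕ} (nu : Fin k → ℕ) (N : ℕ) : Fin N → ℤ :=
  fun i => ((Finset.univ.filter fun j : Fin k => i.1 + 1 ≤ nu j).card : ℤ)

lemma jt_conj_of_le (c : ℕ → ℚ) {k : ℕ} (nu : Fin k → ℕ) {N₀ N : ℕ} (hN : N₀ ≤ N)
    (h : ∀ j, nu j ≤ N₀) : jt c (conj nu N) = jt c (conj nu N₀) := by
  induction N, hN using Nat.le_induction with
  | base => rfl
  | succ N hN ih =>
    rw [jt_of_last_eq_zero, ← ih]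
    · rfl
    · simp only [conj, Fin.val_last, Nat.cast_eq_zero, Finset.card_eq_zero]
      refine Finset.filter_eq_empty_iff.2 fun j _ => ?_
      have := h j
      omega

/-- The dual Jacobi–Trudi identity. -/
lemma jt_eq_jt_conj (c : ℕ → ℚ) (hc : ∀ n, c n * c n = 1) {k : ℕ} (nu : Fin k → ℕ)
    (hnu : Antitone nu) (N : ℕ) (h : ∀ j, nu j ≤ N) :
    jt c (fun i => (nu i : ℤ)) = jt (dual c) (conj nu N) := by
  induction k generalizing N with
  | zero =>
    rw [jt_conj_of_le _ nu (Nat.zero_le N) (fun j => j.elim0)]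
    simp [jt]
  | succ k ih =>
    have hle : ∀ j, nu j ≤ nu 0 := fun j => hnu (Fin.zero_le j)
    rw [jt_conj_of_le _ nu (h 0) hle]
    have h1 : (fun i => (nu i : ℤ)) = (Fin.cons (nu 0 : ℤ) fun i : Fin k => (nu i.succ : ℤ)) := by
      funext i
      refine Fin.cases ?_ (fun i => ?_) i <;> simp
    rw [h1, ← vop_jt c hc, ih (fun i => nu i.succ)
      (fun a b hab => hnu (Fin.succ_le_succ_iff.2 hab)) (nu 0) (fun j => hle _),
      vop_dual_jt c hc _ (fun i => by simp [conj])]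
    congr 1
    funext i
    have hi : i.1 + 1 ≤ nu 0 := i.2
    simp only [conj]
    rw [Fin.card_filter_univ_succ, if_pos hi]
    push_cast
    rfl

/-! ### Products of vertex operators -/

lemma foldr_Sop {l m : ℕ} (mu : Fin l → ℕ) (ρ : Fin m → ℤ) (a : ℚ) :
    (List.ofFn fun i => -(mu i : ℤ)).foldr Sop (a • jt cH ρ) =
      a • jt cH (Fin.append (fun i => (mu i : ℤ)) ρ) := by
  induction l with
  | zero =>
    rw [Fin.append_left_nil _ _ rfl]
    exact congrArg (a • ·) (jt_cast cH (zero_add m) ρ).symm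
  | succ l ih =>
    have h1 : (fun i => (mu i : ℤ)) = (Fin.cons (mu 0 : ℤ) fun i : Fin l => (mu i.succ : ℤ)) := by
      funext i
      refine Fin.cases ?_ (fun i => ?_) i <;> simp
    rw [List.ofFn_succ, List.foldr_cons, ih fun i => mu i.succ, Sop_eq_vop, vop_smul,
      vop_jt cH cH_sq, h1, Fin.append_cons]
    exact congrArg (a • ·) (jt_cast cH _ _).symm

lemma foldr_SstarOp {l m : ℕ} (mu : Fin l → ℕ) (ρ : Fin m → ℤ) :
    (List.ofFn fun i => (mu i : ℤ)).foldr SstarOp (jt cE ρ) =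
      (-1 : ℚ) ^ (∑ i, mu i) • jt cE (Fin.append (fun i => (mu i : ℤ)) ρ) := by
  induction l with
  | zero =>
    rw [Fin.append_left_nil _ _ rfl, Finset.univ_eq_empty, Finset.sum_empty, pow_zero, one_smul]
    exact (jt_cast cE (zero_add m) ρ).symm
  | succ l ih =>
    have h1 : (fun i => (mu i : ℤ)) = (Fin.cons (mu 0 : ℤ) fun i : Fin l => (mu i.succ : ℤ)) := by
      funext i
      refine Fin.cases ?_ (fun i => ?_) i <;> simp
    rw [List.ofFn_succ, List.foldr_cons, ih fun i => mu i.succ, SstarOp_eq_vop, vop_smul,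
      vop_jt cE cE_sq, h1, Fin.append_cons, smul_smul, ← pow_add, Fin.sum_univ_succ]
    exact congrArg (((-1 : ℚ) ^ _) • ·) (jt_cast cE _ _).symm

lemma jt_nil (c : ℕ → ℚ) (ρ : Fin 0 → ℤ) : jt c ρ = 1 := by simp [jt]

lemma foldr_Sop_one {l : ℕ} (mu : Fin l → ℕ) :
    (List.ofFn fun i => -(mu i : ℤ)).foldr Sop 1 = jt cH (fun i => (mu i : ℤ)) := by
  have h := foldr_Sop mu Fin.elim0 1
  rw [jt_nil, one_smul, one_smul, Fin.append_right_nil _ _ rfl] at h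
  exact h.trans (jt_cast cH (add_zero l) fun i => (mu i : ℤ))

lemma foldr_SstarOp_one {l : ℕ} (mu : Fin l → ℕ) :
    (List.ofFn fun i => (mu i : ℤ)).foldr SstarOp 1 =
      (-1 : ℚ) ^ (∑ i, mu i) • jt cE (fun i => (mu i : ℤ)) := by
  have h := foldr_SstarOp mu Fin.elim0
  rw [jt_nil, Fin.append_right_nil _ _ rfl] at h
  exact h.trans (congrArg _ (jt_cast cE (add_zero l) fun i => (mu i : ℤ)))

/-- mixed products of vertex operators and dual vertex operators on the
vacuum are signed Schur functions of juxtaposed tuples: for partitions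
`μ = (μ₁,…,μ_l)` and `ν = (ν₁,…,ν_k)`, with `ν'` the conjugate partition of `ν` and
`(μ,ν')` the juxtaposed integer tuple of length `l + ν₁`:
`S_{−μ₁} ⋯ S_{−μ_l} S*_{ν₁} ⋯ S*_{ν_k} (1) = (−1)^{|ν|} s_{(μ,ν')}` and
`S*_{μ₁} ⋯ S*_{μ_l} S_{−ν₁} ⋯ S_{−ν_k} (1) = (−1)^{|μ|} s_{(μ,ν')'}`. -/
theorem mixed_vertex_products (l k : ℕ) (mu : Fin l → ℕ) (nu : Fin k → ℕ)
    (hmu : Antitone mu) (hnu : Antitone nu) :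
    ((List.ofFn fun i => -(mu i : ℤ)).foldr Sop
        ((List.ofFn fun i => (nu i : ℤ)).foldr SstarOp 1)
      = ((-1 : ℚ)) ^ (∑ i, nu i) •
        schur (Fin.append (fun i => (mu i : ℤ))
          (fun i : Fin (if h : 0 < k then nu ⟨0, h⟩ else 0) =>
            ((Finset.univ.filter fun j : Fin k => i.1 + 1 ≤ nu j).card : ℤ)))) ∧
    ((List.ofFn fun i => (mu i : ℤ)).foldr SstarOp
        ((List.ofFn fun i => -(nu i : ℤ)).foldr Sop 1)
      = ((-1 : ℚ)) ^ (∑ i, mu i) •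
        schurE (Fin.append (fun i => (mu i : ℤ))
          (fun i : Fin (if h : 0 < k then nu ⟨0, h⟩ else 0) =>
            ((Finset.univ.filter fun j : Fin k => i.1 + 1 ≤ nu j).card : ℤ)))) := by
  have hle : ∀ j, nu j ≤ if h : 0 < k then nu ⟨0, h⟩ else 0 := by
    intro j
    rw [dif_pos j.pos]
    exact hnu (Fin.mk_le_of_le_val (Nat.zero_le _))
  constructor
  · rw [foldr_SstarOp_one, jt_eq_jt_conj cE cE_sq nu hnu _ hle, dual_cE, foldr_Sop]
    rfl
  · rw [foldr_Sop_one, jt_eq_jt_conj cH cH_sq nu hnu _ hle, dual_cH, foldr_SstarOp]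
    rfl
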